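/- Let t, n', i' be positive integers and set n = t·n', i = t·i'. Then the number of d ∈ {1,−1}^n with ζ_n^i(d) = d equals the t-th power of the number of e ∈ {1,−1}^{n'} with ζ_{n'}^{i'}(e) = e. -/

import Mathlib

/-- The signed cyclic shift `ζ_N` on `{±1}^N`: `(ζ d)_0 = -d_{N-1}` and `(ζ d)_k = d_{k-1}`
for `k ≥ 1` (0-based indexing). -/
def zeta (N : ℕ) (d : Fin N → ℤˣ) : Fin N → ℤˣ := fun k =>
  if (k : ℕ) = 0 then -d ⟨N - 1, Nat.sub_lt k.pos Nat.one_pos⟩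
  else d ⟨(k : ℕ) - 1, Nat.lt_of_le_of_lt (Nat.sub_le _ _) k.isLt⟩

theorem zeta_apply (N : ℕ) (d : Fin N → ℤˣ) (k : Fin N) :
    zeta N d k = if (k : ℕ) = 0 then -d ⟨N - 1, Nat.sub_lt k.pos Nat.one_pos⟩
      else d ⟨k - 1, by omega⟩ :=
  rfl

/-- Closed form of the `j`-fold signed cyclic shift for `j ≤ N`. -/
theorem zeta_iterate_apply (N j : ℕ) (hj : j ≤ N) (d : Fin N → ℤˣ) (k : Fin N) :
    (zeta N)^[j] d k =
      if h : (k : ℕ) < j then -d ⟨k + N - j, by omega⟩ else d ⟨k - j, by omega⟩ := by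
  induction j generalizing k with
  | zero => simp
  | succ j ih =>
    rw [Function.iterate_succ_apply']
    have hk := k.isLt
    rw [zeta_apply]
    by_cases h0 : (k : ℕ) = 0
    · rw [if_pos h0]
      rw [ih (by omega)]
      rw [dif_neg (by simp only; omega), dif_pos (by omega)]
      congr 3
      simp only
      omega
    · rw [if_neg h0]
      rw [ih (by omega)]
      by_cases h : (k : ℕ) < j + 1
      · rw [dif_pos (by simp only; omega), dif_pos h]
        congr 3
        simp only
        omega
      · rw [dif_neg (by simp only; omega), dif_neg h]
        congr 2
        simp only
        omega

/-- Splitting a sequence of length `t * n` into its `t` subsequences along the residue classes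
modulo `t`. -/
def residueSplit (t n : ℕ) (α : Type*) : (Fin (t * n) → α) ≃ (Fin t → Fin n → α) :=
  (Equiv.arrowCongr
    ((finCongr (Nat.mul_comm t n)).trans (finProdFinEquiv.symm.trans (Equiv.prodComm _ _)))
    (Equiv.refl α)).trans (Equiv.curry _ _ _)

theorem residueSplit_apply (t n : ℕ) {α : Type*} (d : Fin (t * n) → α) (r : Fin t) (q : Fin n)
    (h : r + t * q < t * n) : residueSplit t n α d r q = d ⟨r + t * q, h⟩ :=
  rfl

/-- The `t`-fold signed cyclic shift acts on each residue class modulo `t` as a single one. -/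
theorem residueSplit_semiconj (t n : ℕ) (hn : 0 < n) :
    Function.Semiconj (residueSplit t n ℤˣ) (zeta (t * n))^[t] (Pi.map fun _ => zeta n) := by
  intro d
  funext r q
  have hlt (a : ℕ) (ha : a < n) : r + t * a < t * n := by
    have := Nat.mul_le_mul_left t (Nat.succ_le_of_lt ha)
    have := r.isLt
    rw [Nat.mul_succ] at *
    omega
  have hr := r.isLt
  rw [residueSplit_apply _ _ _ _ _ (hlt q q.isLt),
    zeta_iterate_apply _ _ (Nat.le_mul_of_pos_right t hn), Pi.map_apply]
  rw [zeta_apply]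
  rcases Nat.eq_zero_or_eq_succ_pred (q : ℕ) with h0 | h0
  · rw [if_pos h0, dif_pos (by simp [h0]), residueSplit_apply _ _ _ _ _ (hlt _ (by omega))]
    congr 3
    obtain ⟨m, rfl⟩ := Nat.exists_eq_succ_of_ne_zero hn.ne'
    simp only [h0, Nat.succ_eq_add_one, Nat.add_sub_cancel, Nat.mul_add]
    omega
  · have hq : t * (q : ℕ) = t * (q - 1) + t := by
      conv_lhs => rw [h0]
      rfl
    rw [if_neg (by omega), dif_neg (by simp only; omega),
      residueSplit_apply _ _ _ _ _ (hlt _ (by omega))]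
    congr 2
    simp only
    omega

/-- for positive `t, n', i'` and `n = t·n'`, `i = t·i'`, the number of fixed
points of `ζ_n^i` on `{±1}^n` is the `t`-th power of the number of fixed points of
`ζ_{n'}^{i'}` on `{±1}^{n'}`. -/
theorem stmt_11 (t n' i' : ℕ) (ht : 0 < t) (hn' : 0 < n') (hi' : 0 < i') :
    Nat.card {d : Fin (t * n') → ℤˣ // (zeta (t * n'))^[t * i'] d = d} =
      (Nat.card {e : Fin n' → ℤˣ // (zeta n')^[i'] e = e}) ^ t := by
  have fixed_iff (d : Fin (t * n') → ℤˣ) : (zeta (t * n'))^[t * i'] d = d ↔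
      ∀ r, (zeta n')^[i'] (residueSplit t n' ℤˣ d r) = residueSplit t n' ℤˣ d r := by
    rw [← (residueSplit t n' ℤˣ).injective.eq_iff, Function.iterate_mul,
      ((residueSplit_semiconj t n' hn').iterate_right i').eq, Pi.map_iterate, funext_iff]
    rfl
  rw [Nat.card_congr (((residueSplit t n' ℤˣ).subtypeEquiv fixed_iff).trans
    (Equiv.subtypePiEquivPi (p := fun _ e => (zeta n')^[i'] e = e))), Nat.card_pi]
  simp
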